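/- (Generalized decomposition / induction hypothesis of the proof of Theorem 1.) In the GSP operator setting, for every l ∈ {1, …, n} the suffix GSP operator satisfies N_l = ∑_{k=l}^n ((1-γ)/(1-β_k)) · (∏_{i=l}^{k-1} (γ-β_i)/(1-β_i)) · (M_l · M_{l+1} · ⋯ · M_k), where the empty product (for k = l) equals 1. -/

import Mathlib

/-- The successor operator at discount `δ`: `M_δ(x) := (1-δ) · (1 - δ·x)⁻¹ · x`,
the operator form of the normalized successor measure. -/
noncomputable def succOp {A : Type*} [NormedRing A] [NormedAlgebra ℝ A]
    (δ : ℝ) (x : A) : A :=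
  (1 - δ) • (Ring.inverse (1 - δ • x) * x)

/-- Auxiliary backward recursion for the GSP operators: `gspNAux γ α x n j = N (n-1-j)`
(0-indexed), where `N (n-1) = M_γ(x (n-1))` and, for `l < n-1`,
`N l = (1 - β_l·x_l)⁻¹ · ((1-γ)·x_l + γ·α_l·x_l·N (l+1))` with `β_l = γ·(1-α_l)`. -/
noncomputable def gspNAux {A : Type*} [NormedRing A] [NormedAlgebra ℝ A]
    (γ : ℝ) (α : ℕ → ℝ) (x : ℕ → A) (n : ℕ) : ℕ → A
  | 0 => succOp γ (x (n - 1))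
  | j + 1 =>
      Ring.inverse (1 - (γ * (1 - α (n - 1 - (j + 1)))) • x (n - 1 - (j + 1))) *
        ((1 - γ) • x (n - 1 - (j + 1)) +
          (γ * α (n - 1 - (j + 1))) • (x (n - 1 - (j + 1)) * gspNAux γ α x n j))

/-- The GSP operators `N l` (0-indexed, `l = 0, …, n-1`), defined by backward recursion. -/
noncomputable def gspN {A : Type*} [NormedRing A] [NormedAlgebra ℝ A]
    (γ : ℝ) (α : ℕ → ℝ) (x : ℕ → A) (n : ℕ) (l : ℕ) : A :=
  gspNAux γ α x n (n - 1 - l)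

/-!
Solving the Bellman equation for its left-hand side turns it into the affine recursion
`N_k = (1-γ)/(1-β_k) • M_k + (γ-β_k)/(1-β_k) • M_k N_{k+1}`, because
`(1 - β_k x_k)⁻¹ x_k = (1-β_k)⁻¹ M_k`. Unrolling it from `l` to `n` gives the sum plus a multiple
of `N_n`, whose coefficient contains the factor `γ - β_{n-1} = 0`.
-/

open Finset

theorem eq_sum_smul_prod_add_of_affine_recursion {R A : Type*} [CommSemiring R] [Semiring A]
    [Algebra R A] {c d : ℕ → R} {M N : ℕ → A} {l n : ℕ} (hln : l ≤ n)
    (hN : ∀ k ∈ Ico l n, N k = c k • M k + d k • (M k * N (k + 1))) :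
    N l = ∑ k ∈ Ico l n,
        (c k * ∏ i ∈ Ico l k, d i) • ((List.range' l (k + 1 - l)).map M).prod
      + (∏ i ∈ Ico l n, d i) • (((List.range' l (n - l)).map M).prod * N n) := by
  induction n, hln using Nat.le_induction with
  | base => simp
  | succ m hlm ih =>
    have word_succ : ((List.range' l (m + 1 - l)).map M).prod
        = ((List.range' l (m - l)).map M).prod * M m := by
      rw [Nat.sub_add_comm hlm, List.range'_1_concat, Nat.add_sub_cancel' hlm]
      simp
    have unroll_below := ih fun k hk => hN k (Ico_subset_Ico_right m.le_succ hk)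
    have unroll_at := hN m (mem_Ico.2 ⟨hlm, m.lt_succ_self⟩)
    rw [unroll_below, unroll_at, sum_Ico_succ_top hlm, prod_Ico_succ_top hlm, word_succ, add_assoc]
    simp only [mul_add, smul_add, mul_smul_comm, smul_smul, mul_assoc, mul_comm (c m)]

theorem eq_add_smul_mul_iff_eq_inverse_mul {R A : Type*} [CommSemiring R] [Ring A] [Algebra R A]
    {r : R} {x y b : A} (hx : IsUnit (1 - r • x)) :
    y = b + r • (x * y) ↔ y = Ring.inverse (1 - r • x) * b := by
  rw [eq_comm (b := Ring.inverse _ * b), Ring.inverse_mul_eq_iff_eq_mul _ _ _ hx, sub_mul, one_mul,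
    smul_mul_assoc, eq_sub_iff_add_eq, eq_comm]

theorem abs_mul_one_sub_lt_one {γ a : ℝ} (hγ : γ ∈ Set.Ioo (0 : ℝ) 1)
    (ha : a ∈ Set.Icc (0 : ℝ) 1) : |γ * (1 - a)| < 1 := by
  rw [abs_of_nonneg (mul_nonneg hγ.1.le (sub_nonneg.2 ha.2))]
  exact (mul_le_of_le_one_right hγ.1.le (sub_le_self 1 ha.1)).trans_lt hγ.2

section NormedAlgebra

variable {A : Type*} [NormedRing A] [NormedAlgebra ℝ A]

theorem inverse_one_sub_smul_mul_self {δ : ℝ} (hδ : δ ≠ 1) (x : A) :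
    Ring.inverse (1 - δ • x) * x = (1 - δ)⁻¹ • succOp δ x := by
  rw [succOp, inv_smul_smul₀ (sub_ne_zero.2 hδ.symm)]

theorem isUnit_one_sub_smul [CompleteSpace A] {δ : ℝ} {x : A} (hδ : |δ| < 1) (hx : ‖x‖ ≤ 1) :
    IsUnit (1 - δ • x) := by
  refine isUnit_one_sub_of_norm_lt_one ?_
  calc ‖δ • x‖ = |δ| * ‖x‖ := by rw [norm_smul, Real.norm_eq_abs]
    _ ≤ |δ| := mul_le_of_le_one_right (abs_nonneg δ) hx
    _ < 1 := hδ

theorem eq_smul_succOp_add_of_bellman {γ a : ℝ} {x y z : A}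
    (hunit : IsUnit (1 - (γ * (1 - a)) • x)) (hβ : γ * (1 - a) ≠ 1)
    (hy : y = (1 - γ) • x + (γ * (1 - a)) • (x * y) + (γ * a) • (x * z)) :
    y = ((1 - γ) / (1 - γ * (1 - a))) • succOp (γ * (1 - a)) x
      + ((γ - γ * (1 - a)) / (1 - γ * (1 - a))) • (succOp (γ * (1 - a)) x * z) := by
  rw [add_right_comm, eq_add_smul_mul_iff_eq_inverse_mul hunit] at hy
  rw [hy, mul_add, mul_smul_comm, mul_smul_comm, ← mul_assoc, inverse_one_sub_smul_mul_self hβ,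
    smul_mul_assoc, smul_smul, smul_smul]
  congr 2
  ring

/-- For `k = n - 1` the term `gspN γ α x n n` is a junk value of truncated subtraction; its
coefficient `γ * α (n - 1)` vanishes. -/
theorem gspN_eq_inverse_mul {γ : ℝ} {α : ℕ → ℝ} (x : ℕ → A) {n k : ℕ} (hα : α (n - 1) = 0)
    (hk : k < n) :
    gspN γ α x n k = Ring.inverse (1 - (γ * (1 - α k)) • x k) *
      ((1 - γ) • x k + (γ * α k) • (x k * gspN γ α x n (k + 1))) := by
  obtain rfl | hk' := (Nat.le_sub_one_of_lt hk).eq_or_lt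
  · simp [gspN, gspNAux, succOp, hα]
  · have steps_left : n - 1 - k = n - 1 - (k + 1) + 1 := by lia
    have index_eq : n - 1 - (n - 1 - (k + 1) + 1) = k := by lia
    rw [gspN, steps_left, gspNAux, index_eq, gspN]

theorem gspN_bellman {γ : ℝ} {α : ℕ → ℝ} {x : ℕ → A} {n k : ℕ} (hα : α (n - 1) = 0) (hk : k < n)
    (hunit : IsUnit (1 - (γ * (1 - α k)) • x k)) :
    gspN γ α x n k = (1 - γ) • x k + (γ * (1 - α k)) • (x k * gspN γ α x n k)
      + (γ * α k) • (x k * gspN γ α x n (k + 1)) := by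
  rw [add_right_comm, eq_add_smul_mul_iff_eq_inverse_mul hunit]
  exact gspN_eq_inverse_mul x hα hk

theorem stmt_10_general {γ : ℝ} {α : ℕ → ℝ} {x N : ℕ → A} {l n : ℕ} (hl : l < n)
    (hunit : ∀ k ∈ Ico l n, IsUnit (1 - (γ * (1 - α k)) • x k))
    (hβ : ∀ k ∈ Ico l n, γ * (1 - α k) ≠ 1) (hα : α (n - 1) = 0)
    (hN : ∀ k ∈ Ico l n, N k = (1 - γ) • x k + (γ * (1 - α k)) • (x k * N k)
      + (γ * α k) • (x k * N (k + 1))) :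
    N l = ∑ k ∈ Ico l n,
      (((1 - γ) / (1 - γ * (1 - α k))) *
          ∏ i ∈ Ico l k, (γ - γ * (1 - α i)) / (1 - γ * (1 - α i))) •
        ((List.range' l (k + 1 - l)).map fun i => succOp (γ * (1 - α i)) (x i)).prod := by
  have last_coeff_zero :
      ∏ i ∈ Ico l n, (γ - γ * (1 - α i)) / (1 - γ * (1 - α i)) = 0 :=
    prod_eq_zero (mem_Ico.2 ⟨Nat.le_sub_one_of_lt hl, Nat.sub_one_lt_of_lt hl⟩) (by simp [hα])
  have unrolled := eq_sum_smul_prod_add_of_affine_recursion hl.le fun k hk =>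
    eq_smul_succOp_add_of_bellman (hunit k hk) (hβ k hk) (hN k hk)
  rwa [last_coeff_zero, zero_smul, add_zero] at unrolled

end NormedAlgebra

/-- **Generalized decomposition (induction hypothesis of the proof of Theorem 1).**
In the GSP operator setting (0-indexed), for every `l < n` the suffix GSP operator
satisfies `N l = ∑_{k=l}^{n-1} ((1-γ)/(1-β_k)) · (∏_{i=l}^{k-1} (γ-β_i)/(1-β_i)) •
(M_l · M_{l+1} · ⋯ · M_k)`, where `β_i = γ·(1-α_i)` and `M_i = M_{β_i}(x_i)`;
the empty product (for `k = l`) equals `1`. -/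
theorem stmt_10 {A : Type*} [NormedRing A] [NormOneClass A] [NormedAlgebra ℝ A]
    [CompleteSpace A] (n : ℕ) (hn : 1 ≤ n) (x : ℕ → A) (hx : ∀ k < n, ‖x k‖ ≤ 1)
    (γ : ℝ) (hγ : γ ∈ Set.Ioo (0 : ℝ) 1)
    (α : ℕ → ℝ) (hα : ∀ k < n, α k ∈ Set.Icc (0 : ℝ) 1) (hαn : α (n - 1) = 0)
    (l : ℕ) (hl : l < n) :
    gspN γ α x n l
      = ∑ k ∈ Finset.Ico l n,
          (((1 - γ) / (1 - γ * (1 - α k))) *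
              ∏ i ∈ Finset.Ico l k, (γ - γ * (1 - α i)) / (1 - γ * (1 - α i))) •
            ((List.range' l (k + 1 - l)).map fun i => succOp (γ * (1 - α i)) (x i)).prod := by
  have hβ k (hk : k ∈ Ico l n) := abs_mul_one_sub_lt_one hγ (hα k (mem_Ico.1 hk).2)
  have hunit k (hk : k ∈ Ico l n) := isUnit_one_sub_smul (hβ k hk) (hx k (mem_Ico.1 hk).2)
  exact stmt_10_general hl hunit (fun k hk => (lt_of_abs_lt (hβ k hk)).ne) hαn
    fun k hk => gspN_bellman hαn (mem_Ico.1 hk).2 (hunit k hk)
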